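/- (Corollary 1, unanimous acceptance group rule.) In the two-group voting model, for every j₁ ∈ S₁ and j₂ ∈ S₂, E[X_{j₁}·1_{G₁ ∩ G₂}] − E[X_{j₂}·1_{G₁ ∩ G₂}] = σ₁·f₁·F₂ − σ₂·f₂·F₁. -/

import Mathlib

open MeasureTheory ProbabilityTheory Real Set

/-- Density of the standard normal distribution. -/
noncomputable def stdPdf (y : ℝ) : ℝ := (Real.sqrt (2 * Real.pi))⁻¹ * Real.exp (-(y ^ 2) / 2)

/-- Cumulative distribution function of the standard normal distribution. -/
noncomputable def stdCdf (y : ℝ) : ℝ := ∫ x in Set.Iic y, stdPdf x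

open scoped NNReal Topology
open Filter

theorem stdPdf_eq_gaussianPDFReal : stdPdf = gaussianPDFReal 0 1 := by
  ext x
  simp [stdPdf, gaussianPDFReal]

theorem stdPdf_neg (x : ℝ) : stdPdf (-x) = stdPdf x := by
  simp [stdPdf]

theorem hasDerivAt_neg_stdPdf (x : ℝ) : HasDerivAt (fun y => -stdPdf y) (x * stdPdf x) x := by
  have h : HasDerivAt (fun y : ℝ => -(y ^ 2) / 2) (-x) x := by
    refine ((hasDerivAt_pow 2 x).neg.div_const 2).congr_deriv ?_
    norm_num
    ring
  refine (h.exp.const_mul (Real.sqrt (2 * Real.pi))⁻¹).neg.congr_deriv ?_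
  simp only [stdPdf]
  ring

theorem tendsto_stdPdf_atTop : Tendsto stdPdf atTop (𝓝 0) := by
  have h : Tendsto (fun y : ℝ => -(y ^ 2) / 2) atTop atBot := by
    have : Tendsto (fun y : ℝ => y ^ 2 / 2) atTop atTop :=
      (tendsto_pow_atTop two_ne_zero).atTop_div_const two_pos
    simpa only [neg_div, Function.comp_def] using tendsto_neg_atTop_atBot.comp this
  have := (Real.tendsto_exp_atBot.comp h).const_mul (Real.sqrt (2 * Real.pi))⁻¹
  rw [mul_zero] at this
  exact this

theorem integrable_mul_stdPdf : Integrable (fun x => x * stdPdf x) := by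
  convert (integrable_mul_exp_neg_mul_sq (b := 1 / 2) (by norm_num)).const_mul
    (Real.sqrt (2 * Real.pi))⁻¹ using 2 with x
  simp only [stdPdf]
  ring_nf

theorem setIntegral_Ioi_stdPdf (a : ℝ) : ∫ x in Ioi a, stdPdf x = stdCdf (-a) := by
  simpa only [stdPdf_neg, stdCdf] using integral_comp_neg_Ioi a stdPdf

theorem setIntegral_Ioi_mul_stdPdf (a : ℝ) : ∫ x in Ioi a, x * stdPdf x = stdPdf a := by
  rw [integral_Ioi_of_hasDerivAt_of_tendsto' (fun x _ => hasDerivAt_neg_stdPdf x)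
    integrable_mul_stdPdf.integrableOn tendsto_stdPdf_atTop.neg]
  simp

theorem setIntegral_gaussianReal_zero_one {s : Set ℝ} (hs : MeasurableSet s) (f : ℝ → ℝ) :
    ∫ x in s, f x ∂gaussianReal 0 1 = ∫ x in s, f x * stdPdf x := by
  rw [← integral_indicator hs, integral_gaussianReal_eq_integral_smul one_ne_zero,
    ← integral_indicator hs, stdPdf_eq_gaussianPDFReal]
  congr with x
  by_cases hx : x ∈ s <;> simp [hx, mul_comm]

theorem setOf_lt_eq_standardization {α : Type*} {A : α → ℝ} {m s : ℝ} (hs : 0 < s) (t : ℝ) :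
    {ω | t < A ω} = {ω | -((m - t) / s) < (A ω - m) / s} := by
  ext ω
  simp only [mem_ofPred_eq, ← neg_div, div_lt_div_iff_of_pos_right hs]
  constructor <;> intro h <;> linarith

section TruncatedMoments

variable {Ω : Type*} [MeasurableSpace Ω] {P : Measure Ω} {Z : Ω → ℝ}

theorem measureReal_lt_of_hasLaw_gaussianReal_zero_one (hZ : HasLaw Z (gaussianReal 0 1) P)
    (a : ℝ) : P.real {ω | a < Z ω} = stdCdf (-a) := by
  have h := setIntegral_gaussianReal_zero_one (measurableSet_Ioi (a := a)) (fun _ => 1)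
  simp only [setIntegral_const, smul_eq_mul, mul_one, one_mul, setIntegral_Ioi_stdPdf] at h
  exact (hZ.measureReal_eq measurableSet_Ioi).trans h

theorem setIntegral_lt_of_hasLaw_gaussianReal_zero_one (hZ : HasLaw Z (gaussianReal 0 1) P)
    (a : ℝ) : ∫ ω in {ω | a < Z ω}, Z ω ∂P = stdPdf a := by
  have h := setIntegral_map (μ := P) (g := Z) (f := fun x => x) (measurableSet_Ioi (a := a))
    aestronglyMeasurable_id hZ.aemeasurable
  rw [hZ.map_eq, setIntegral_gaussianReal_zero_one measurableSet_Ioi,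
    setIntegral_Ioi_mul_stdPdf] at h
  exact h.symm

variable {A : Ω → ℝ} {m s : ℝ}

theorem hasLaw_standardization (hs : 0 < s)
    (hA : HasLaw A (gaussianReal m (s ^ 2).toNNReal) P) :
    HasLaw (fun ω => (A ω - m) / s) (gaussianReal 0 1) P := by
  convert gaussianReal_div_const (gaussianReal_sub_const hA m) s using 2
  · simp
  · ext
    have : s ^ 2 ≠ 0 := by positivity
    simp [Real.coe_toNNReal _ (sq_nonneg s), this]

theorem measureReal_lt_of_hasLaw_gaussianReal (hs : 0 < s)
    (hA : HasLaw A (gaussianReal m (s ^ 2).toNNReal) P) (t : ℝ) :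
    P.real {ω | t < A ω} = stdCdf ((m - t) / s) := by
  rw [setOf_lt_eq_standardization (m := m) hs,
    measureReal_lt_of_hasLaw_gaussianReal_zero_one (hasLaw_standardization hs hA), neg_neg]

theorem setIntegral_lt_of_hasLaw_gaussianReal (hs : 0 < s)
    (hA : HasLaw A (gaussianReal m (s ^ 2).toNNReal) P) (t : ℝ) :
    ∫ ω in {ω | t < A ω}, A ω ∂P
      = m * stdCdf ((m - t) / s) + s * stdPdf ((m - t) / s) := by
  have : IsProbabilityMeasure P := hA.isProbabilityMeasure
  have hZ := hasLaw_standardization hs hA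
  have hint : Integrable (fun ω => (A ω - m) / s) P := by
    have h : Integrable id (P.map fun ω => (A ω - m) / s) := by
      rw [hZ.map_eq]
      exact memLp_one_iff_integrable.mp (memLp_id_gaussianReal 1)
    exact h.comp_aemeasurable hZ.aemeasurable
  have hdecomp : A = fun ω => m + s * ((A ω - m) / s) := by
    ext ω
    field_simp
    ring
  calc ∫ ω in {ω | t < A ω}, A ω ∂P
      = ∫ ω in {ω | t < A ω}, (m + s * ((A ω - m) / s)) ∂P := by rw [← hdecomp]
    _ = m * P.real {ω | t < A ω} + s * ∫ ω in {ω | t < A ω}, (A ω - m) / s ∂P := by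
        rw [integral_add (integrable_const m) (hint.integrableOn.const_mul s),
          integral_const_mul]
        simp [mul_comm]
    _ = _ := by
        rw [measureReal_lt_of_hasLaw_gaussianReal hs hA, setOf_lt_eq_standardization (m := m) hs,
          setIntegral_lt_of_hasLaw_gaussianReal_zero_one hZ, stdPdf_neg]

end TruncatedMoments

section SampleMean

variable {Ω ι : Type*} [MeasurableSpace Ω] {P : Measure Ω} {X : ι → Ω → ℝ}

theorem iIndepFun_map_sum_gaussianReal (hmeas : ∀ j, Measurable (X j)) (hindep : iIndepFun X P)
    {m : ℝ} {v : ℝ≥0} (hdist : ∀ j, P.map (X j) = gaussianReal m v) (S : Finset ι) :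
    P.map (∑ j ∈ S, X j) = gaussianReal (S.card * m) (S.card * v) := by
  classical
  have : IsProbabilityMeasure P := hindep.isProbabilityMeasure
  induction S using Finset.induction_on with
  | empty =>
    simp only [Finset.sum_empty, Finset.card_empty, Nat.cast_zero, zero_mul, gaussianReal_zero_var]
    exact (Measure.map_const P (0 : ℝ)).trans (by simp)
  | insert a S ha ih =>
    rw [Finset.sum_insert ha, add_comm, gaussianReal_add_gaussianReal_of_indepFun
      (hindep.indepFun_finsetSum_of_notMem hmeas ha) ih (hdist a), Finset.card_insert_of_notMem ha]
    push_cast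
    congr 1 <;> ring

theorem hasLaw_sampleMean (hmeas : ∀ j, Measurable (X j)) (hindep : iIndepFun X P)
    {m σ : ℝ} (hdist : ∀ j, P.map (X j) = gaussianReal m (σ ^ 2).toNNReal)
    {S : Finset ι} (hS : S.Nonempty) :
    HasLaw (fun ω => (S.card : ℝ)⁻¹ * ∑ j ∈ S, X j ω)
      (gaussianReal m ((σ / Real.sqrt S.card) ^ 2).toNNReal) P := by
  have hcard : (S.card : ℝ) ≠ 0 := by exact_mod_cast hS.card_pos.ne'
  have hsum : HasLaw (∑ j ∈ S, X j) (gaussianReal (S.card * m) (S.card * (σ ^ 2).toNNReal)) P :=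
    ⟨by fun_prop,
      iIndepFun_map_sum_gaussianReal hmeas hindep hdist S⟩
  convert gaussianReal_const_mul hsum (S.card : ℝ)⁻¹ using 2
  · simp
  · field_simp
  · ext
    simp only [NNReal.coe_mul, NNReal.coe_mk, NNReal.coe_natCast, div_pow,
      Real.sq_sqrt (Nat.cast_nonneg _)]
    rw [Real.coe_toNNReal _ (by positivity), Real.coe_toNNReal _ (by positivity)]
    field_simp

/-- The integral of a coordinate of an i.i.d. family over an event depending only on the sum does
not depend on the coordinate. -/
theorem setIntegral_lt_sampleMean_eq_of_mem (hmeas : ∀ j, Measurable (X j))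
    (hindep : iIndepFun X P) {ν : Measure ℝ} (hdist : ∀ j, P.map (X j) = ν)
    {S : Finset ι} (t c : ℝ) {j k : ι} (hj : j ∈ S) (hk : k ∈ S) :
    ∫ ω in {ω | t < c * ∑ i ∈ S, X i ω}, X j ω ∂P
      = ∫ ω in {ω | t < c * ∑ i ∈ S, X i ω}, X k ω ∂P := by
  classical
  have hlaw (e : Equiv.Perm S) :
      HasLaw (fun ω (i : S) => X (e i) ω) (Measure.pi fun _ => ν) P :=
    iIndepFun.hasLaw_pi (fun i => ⟨(hmeas _).aemeasurable, hdist _⟩)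
      (hindep.precomp (g := fun i : S => ((e i : S) : ι))
        (Subtype.val_injective.comp e.injective))
  have hE : MeasurableSet {y : S → ℝ | t < c * ∑ i, y i} :=
    measurableSet_lt (by fun_prop) (by fun_prop)
  have hperm (e : Equiv.Perm S) :
      ∫ ω in {ω | t < c * ∑ i ∈ S, X i ω}, X (e ⟨j, hj⟩) ω ∂P
        = ∫ y in {y : S → ℝ | t < c * ∑ i, y i}, y ⟨j, hj⟩ ∂(Measure.pi fun _ => ν) := by
    rw [← (hlaw e).map_eq, setIntegral_map hE (measurable_pi_apply _).aestronglyMeasurable (hlaw e).aemeasurable]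
    congr 2
    ext ω
    simp only [mem_ofPred_eq, mem_preimage]
    rw [Equiv.sum_comp e (fun i : S => X i ω), Finset.sum_coe_sort S (fun i => X i ω)]
  have h₁ := hperm (Equiv.refl _)
  have h₂ := hperm (Equiv.swap ⟨j, hj⟩ ⟨k, hk⟩)
  rw [Equiv.swap_apply_left] at h₂
  exact h₁.trans h₂.symm

theorem setIntegral_lt_sampleMean (hmeas : ∀ j, Measurable (X j)) (hindep : iIndepFun X P)
    {m σ : ℝ} (hσ : 0 < σ) (hdist : ∀ j, P.map (X j) = gaussianReal m (σ ^ 2).toNNReal)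
    {S : Finset ι} (t : ℝ) {j : ι} (hj : j ∈ S) :
    ∫ ω in {ω | t < (S.card : ℝ)⁻¹ * ∑ i ∈ S, X i ω}, X j ω ∂P
      = m * stdCdf ((m - t) / (σ / Real.sqrt S.card))
        + σ / Real.sqrt S.card * stdPdf ((m - t) / (σ / Real.sqrt S.card)) := by
  have hS : S.Nonempty := ⟨j, hj⟩
  have hcard : 0 < (S.card : ℝ) := by exact_mod_cast hS.card_pos
  have hint (i : ι) : Integrable (X i) P := by
    have h : Integrable id (P.map (X i)) := by
      rw [hdist]
      exact memLp_one_iff_integrable.mp (memLp_id_gaussianReal 1)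
    exact h.comp_aemeasurable (hmeas i).aemeasurable
  rw [← setIntegral_lt_of_hasLaw_gaussianReal (div_pos hσ (Real.sqrt_pos.mpr hcard))
    (hasLaw_sampleMean hmeas hindep hdist hS), integral_const_mul,
    integral_finsetSum _ fun i _ => (hint i).integrableOn,
    Finset.sum_congr rfl fun i hi =>
      setIntegral_lt_sampleMean_eq_of_mem hmeas hindep hdist t _ hi hj,
    Finset.sum_const, nsmul_eq_mul, inv_mul_cancel_left₀ hcard.ne']

theorem setIntegral_lt_inter_lt_of_disjoint (hmeas : ∀ j, Measurable (X j))
    (hindep : iIndepFun X P) {S T : Finset ι} (hST : Disjoint S T) (t u c d : ℝ) {j : ι}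
    (hj : j ∈ S) :
    ∫ ω in {ω | t < c * ∑ i ∈ S, X i ω} ∩ {ω | u < d * ∑ i ∈ T, X i ω}, X j ω ∂P
      = (∫ ω in {ω | t < c * ∑ i ∈ S, X i ω}, X j ω ∂P)
        * P.real {ω | u < d * ∑ i ∈ T, X i ω} := by
  have hE (R : Finset ι) (b r : ℝ) : MeasurableSet {y : R → ℝ | b < r * ∑ i, y i} :=
    measurableSet_lt (by fun_prop) (by fun_prop)
  have hpre (R : Finset ι) (b r : ℝ) : {ω | b < r * ∑ i ∈ R, X i ω}
      = (fun ω (i : R) => X i ω) ⁻¹' {y : R → ℝ | b < r * ∑ i, y i} := by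
    ext ω
    simp only [mem_ofPred_eq, mem_preimage, Finset.sum_coe_sort R (fun i => X i ω)]
  have htuple (R : Finset ι) : Measurable fun ω (i : R) => X i ω :=
    measurable_pi_lambda _ fun i => hmeas i
  have hf : Measurable ({y : S → ℝ | t < c * ∑ i, y i}.indicator fun y => y ⟨j, hj⟩) :=
    (measurable_pi_apply _).indicator (hE S t c)
  have h := Indep.setIntegral_eq_mul (htuple T).comap_le
    (hindep.indepFun_finset S T hST hmeas).symm (htuple S).aemeasurable
    ⟨_, hE T u d, rfl⟩ hf.aestronglyMeasurable
  have hind : (fun ω => {y : S → ℝ | t < c * ∑ i, y i}.indicator (fun y => y ⟨j, hj⟩)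
      (fun i : S => X i ω)) = {ω | t < c * ∑ i ∈ S, X i ω}.indicator (X j) := by
    rw [hpre]
    rfl
  have hG : MeasurableSet {ω | t < c * ∑ i ∈ S, X i ω} := by
    rw [hpre]
    exact htuple S (hE S t c)
  rw [hind, ← hpre, setIntegral_indicator hG, integral_indicator hG] at h
  rw [inter_comm, h, mul_comm]

end SampleMean

/-- Corollary 1, unanimous acceptance group rule: for every `j₁ ∈ S₁` and `j₂ ∈ S₂`,
`E[X_{j₁}·1_{G₁ ∩ G₂}] − E[X_{j₂}·1_{G₁ ∩ G₂}] = σ₁·f₁·F₂ − σ₂·f₂·F₁`. -/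
theorem comparative_increment_unanimous_acceptance
    {Ω ι : Type*} [MeasureSpace Ω] [IsProbabilityMeasure (ℙ : Measure Ω)]
    (μ σ : ℝ) (hσ : 0 < σ)
    (X : ι → Ω → ℝ) (hmeas : ∀ j, Measurable (X j))
    (hindep : iIndepFun X ℙ)
    (hdist : ∀ j, Measure.map (X j) ℙ = gaussianReal μ ((σ ^ 2).toNNReal))
    (S₁ S₂ : Finset ι) (hdisj : Disjoint S₁ S₂)
    (g₁ g₂ : ℕ) (hcard₁ : S₁.card = g₁) (hcard₂ : S₂.card = g₂)
    (hg₁ : 1 ≤ g₁) (hg₂ : 1 ≤ g₂)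
    (t₁ t₂ : ℝ)
    (A₁ A₂ : Ω → ℝ)
    (hA₁ : A₁ = fun ω => (g₁ : ℝ)⁻¹ * ∑ j ∈ S₁, X j ω)
    (hA₂ : A₂ = fun ω => (g₂ : ℝ)⁻¹ * ∑ j ∈ S₂, X j ω)
    :
    ∀ j₁ ∈ S₁, ∀ j₂ ∈ S₂,
      (∫ ω in {ω | t₁ < A₁ ω} ∩ {ω | t₂ < A₂ ω}, X j₁ ω) - (∫ ω in {ω | t₁ < A₁ ω} ∩ {ω | t₂ < A₂ ω}, X j₂ ω) =
        (σ / Real.sqrt g₁) * stdPdf ((μ - t₁) / (σ / Real.sqrt g₁)) * stdCdf ((μ - t₂) / (σ / Real.sqrt g₂)) - (σ / Real.sqrt g₂) * stdPdf ((μ - t₂) / (σ / Real.sqrt g₂)) * stdCdf ((μ - t₁) / (σ / Real.sqrt g₁)) := by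
  subst hcard₁ hcard₂ hA₁ hA₂
  intro j₁ hj₁ j₂ hj₂
  have hpos {S : Finset ι} (hS : 1 ≤ S.card) : 0 < σ / Real.sqrt S.card :=
    div_pos hσ (Real.sqrt_pos.mpr (by exact_mod_cast hS))
  rw [setIntegral_lt_inter_lt_of_disjoint hmeas hindep hdisj _ _ _ _ hj₁, inter_comm,
    setIntegral_lt_inter_lt_of_disjoint hmeas hindep hdisj.symm _ _ _ _ hj₂,
    setIntegral_lt_sampleMean hmeas hindep hσ hdist _ hj₁,
    setIntegral_lt_sampleMean hmeas hindep hσ hdist _ hj₂,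
    measureReal_lt_of_hasLaw_gaussianReal (hpos hg₁)
      (hasLaw_sampleMean hmeas hindep hdist ⟨j₁, hj₁⟩),
    measureReal_lt_of_hasLaw_gaussianReal (hpos hg₂)
      (hasLaw_sampleMean hmeas hindep hdist ⟨j₂, hj₂⟩)]
  ring
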